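/- Tightness of Schnorr's bound: for every n ≥ 1 there exists a DeMorgan circuit with exactly 3(n − 1) binary gates computing XOR_n; hence CC(XOR_n) = 3(n − 1). -/

import Mathlib

/-- A node (gate) of a DeMorgan circuit on `n` inputs: an input variable, a constant,
a negation of an earlier node, or a binary ∧/∨ of two earlier (ordered) nodes.
Nodes are referenced by their position in the gate list. -/
inductive Gate (n : ℕ) : Type
  | inp : Fin n → Gate n
  | const : Bool → Gate n
  | not : ℕ → Gate n
  | and : ℕ → ℕ → Gate n
  | or : ℕ → ℕ → Gate n
deriving DecidableEq

/-- The (indices of the) nodes a gate reads from. -/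
def Gate.refs {n : ℕ} : Gate n → List ℕ
  | .inp _ => []
  | .const _ => []
  | .not a => [a]
  | .and a b => [a, b]
  | .or a b => [a, b]

/-- A DeMorgan circuit on `n` inputs: a finite DAG of gates, presented as a list in
topological order (every gate only reads strictly earlier gates), with a designated
output node. -/
structure Circuit (n : ℕ) : Type where
  gates : List (Gate n)
  output : Fin gates.length
  wf : ∀ (i : ℕ) (g : Gate n), gates[i]? = some g → ∀ r ∈ g.refs, r < i

/-- Value of a single gate, given the values `acc` of all earlier gates. -/
def Gate.val {n : ℕ} (x : Fin n → Bool) (acc : List Bool) : Gate n → Bool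
  | .inp i => x i
  | .const b => b
  | .not a => !(acc.getD a false)
  | .and a b => acc.getD a false && acc.getD b false
  | .or a b => acc.getD a false || acc.getD b false

/-- The list of values of all gates of the circuit, in topological order. -/
def Circuit.evalList {n : ℕ} (C : Circuit n) (x : Fin n → Bool) : List Bool :=
  C.gates.foldl (fun acc g => acc ++ [g.val x acc]) []

/-- The Boolean value computed by the circuit: the value of its output node. -/
def Circuit.eval {n : ℕ} (C : Circuit n) (x : Fin n → Bool) : Bool :=
  (C.evalList x).getD C.output false

/-- A gate is costly when it is a binary (∧/∨) gate; ¬ gates and constants are free. -/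
def Gate.costly {n : ℕ} : Gate n → Bool
  | .and _ _ => true
  | .or _ _ => true
  | _ => false

/-- The size of a circuit: its number of binary (∧/∨) gates. -/
def Circuit.size {n : ℕ} (C : Circuit n) : ℕ := (C.gates.filter Gate.costly).length

/-- `C` computes the Boolean function `f`. -/
def Circuit.Computes {n : ℕ} (C : Circuit n) (f : (Fin n → Bool) → Bool) : Prop :=
  ∀ x, C.eval x = f x

/-- The DeMorgan circuit complexity of `f`: the minimum number of binary gates of a
DeMorgan circuit computing `f`. -/
noncomputable def CC (n : ℕ) (f : (Fin n → Bool) → Bool) : ℕ :=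
  sInf {s | ∃ C : Circuit n, C.Computes f ∧ C.size = s}

/-- The parity function `XOR_n(x) = (x_1 + ⋯ + x_n) mod 2`. -/
def XORf (n : ℕ) (x : Fin n → Bool) : Bool :=
  decide ((∑ i : Fin n, (if x i then 1 else 0)) % 2 = 1)

/-!
Upper bound: `x ⊕ y = (x ∨ y) ∧ ¬(x ∧ y)`, so each further variable costs three binary gates.

Lower bound (gate elimination): since `¬` is free, De Morgan's law turns every binary gate into a
conjunction of possibly negated earlier nodes. In a smallest such network for the parity of at
least two variables, the first gate `g` conjoins literals of two distinct variables `xᵢ` and `xⱼ`.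
Another gate `h` must also read `xᵢ`: otherwise, fixing `xⱼ` so that `g` outputs `0` would make the
output independent of `xᵢ`. Now fix `xᵢ` so that `h` becomes `0`. The parity of the remaining
variables is still not constant, so `h` is not the output, and some third gate reads it. This
third gate, `g` and `h` all become redundant, and the parity of the remaining variables is computed
with three gates fewer.
-/

open Function (update)

section EqUpToNot

variable {α β : Type*} {f g h : α → Bool}

/-- `f` and `g` agree up to a global negation. Since `¬` gates are free, circuits only see Boolean
functions up to this relation. -/
def EqUpToNot (f g : α → Bool) : Prop :=
  ∃ u : Bool, ∀ x, f x = (g x ^^ u)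

theorem EqUpToNot.of_eq (hfg : ∀ x, f x = g x) : EqUpToNot f g :=
  ⟨false, by simpa using hfg⟩

theorem EqUpToNot.symm : EqUpToNot f g → EqUpToNot g f := by
  rintro ⟨u, hu⟩
  exact ⟨u, fun x => by simp [hu]⟩

theorem EqUpToNot.trans : EqUpToNot f g → EqUpToNot g h → EqUpToNot f h := by
  rintro ⟨u, hu⟩ ⟨v, hv⟩
  exact ⟨v ^^ u, fun x => by rw [hu, hv, Bool.xor_assoc]⟩

theorem EqUpToNot.comp (hfg : EqUpToNot f g) (σ : β → α) :
    EqUpToNot (fun x => f (σ x)) (fun x => g (σ x)) :=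
  hfg.imp fun _ hu x => hu (σ x)

theorem eqUpToNot_const (b c : Bool) : EqUpToNot (fun _ : α => b) (fun _ => c) :=
  ⟨c ^^ b, fun _ => by simp⟩

theorem EqUpToNot.apply_eq_iff (hfg : EqUpToNot f g) {x y : α} : f x = f y ↔ g x = g y := by
  obtain ⟨u, hu⟩ := hfg
  rw [hu, hu, Bool.xor_left_inj]

end EqUpToNot

section Parity

variable {ι : Type*} {S : Finset ι} {i : ι}

/-- The parity of the coordinates in `S`. Fixing variables turns `XORf` into such a function, up to
negation. -/
def parityOn (S : Finset ι) (x : ι → Bool) : Bool :=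
  decide ((∑ i ∈ S, (if x i then 1 else 0)) % 2 = 1)

theorem parityOn_univ (n : ℕ) : parityOn (Finset.univ : Finset (Fin n)) = XORf n := rfl

theorem parityOn_singleton (i : ι) (x : ι → Bool) : parityOn {i} x = x i := by
  cases hx : x i <;> simp [parityOn, Finset.sum_singleton, hx, -Finset.sum_boole]

theorem parityOn_cons (hi : i ∉ S) (x : ι → Bool) :
    parityOn (S.cons i hi) x = (parityOn S x ^^ x i) := by
  unfold parityOn
  rw [Finset.sum_cons]
  cases x i
  · simp
  · rw [if_pos rfl, Bool.xor_true, ← decide_not, decide_eq_decide]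
    omega

section Update

variable [DecidableEq ι]

theorem parityOn_update_of_notMem (hi : i ∉ S) (x : ι → Bool) (c : Bool) :
    parityOn S (update x i c) = parityOn S x := by
  have hsum : ∑ j ∈ S, (if update x i c j then 1 else 0) = ∑ j ∈ S, (if x j then 1 else 0) :=
    Finset.sum_congr rfl fun j hj => by
      rw [Function.update_of_ne (ne_of_mem_of_not_mem hj hi)]
  rw [parityOn, parityOn, hsum]

theorem parityOn_update_of_mem (hi : i ∈ S) (x : ι → Bool) (c : Bool) :
    parityOn S (update x i c) = (parityOn (S.erase i) x ^^ c) := by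
  obtain ⟨T, hiT, rfl⟩ : ∃ T, ∃ hiT : i ∉ T, S = T.cons i hiT :=
    ⟨S.erase i, S.notMem_erase i, by rw [Finset.cons_eq_insert, Finset.insert_erase hi]⟩
  rw [parityOn_cons, parityOn_update_of_notMem hiT, Function.update_self, Finset.erase_cons]

theorem parityOn_update_not (hi : i ∈ S) (x : ι → Bool) :
    parityOn S (update x i (!x i)) = !parityOn S x := by
  conv_rhs => rw [← Function.update_eq_self i x]
  rw [parityOn_update_of_mem hi, parityOn_update_of_mem hi, Bool.xor_not]

theorem EqUpToNot.apply_update_not_ne {f : (ι → Bool) → Bool} (hf : EqUpToNot f (parityOn S))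
    (hi : i ∈ S) (x : ι → Bool) : f (update x i (!x i)) ≠ f x := by
  rw [Ne, hf.apply_eq_iff, parityOn_update_not hi]
  exact Bool.not_ne_self _

theorem eqUpToNot_parityOn_erase (hi : i ∈ S) (c : Bool) :
    EqUpToNot (parityOn (S.erase i)) (fun x => parityOn S (update x i c)) :=
  EqUpToNot.symm ⟨c, fun x => parityOn_update_of_mem hi x c⟩

end Update

theorem not_eqUpToNot_parityOn_const (hS : S.Nonempty) (c : Bool) :
    ¬ EqUpToNot (parityOn S) (fun _ => c) := fun hconst => by
  classical
  obtain ⟨i, hi⟩ := hS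
  exact hconst.symm.apply_update_not_ne hi (fun _ => false) rfl

theorem not_eqUpToNot_parityOn_apply (hS : 1 < S.card) (j : ι) :
    ¬ EqUpToNot (parityOn S) (· j) := fun hvar => by
  classical
  obtain ⟨i, hi, hij⟩ := Finset.exists_mem_ne hS j
  exact hvar.symm.apply_update_not_ne hi (fun _ => false) (Function.update_of_ne hij.symm _ _)

end Parity

/-- A straight-line program over the basis `∧`, recorded semantically: gate `k ∈ gates` is the
conjunction of the two functions `input k false` and `input k true`. That these inputs come from
constants, variables and earlier gates is the separate condition `AndNetwork.Valid`. -/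
structure AndNetwork (ι : Type*) where
  gates : Finset ℕ
  input : ℕ → Bool → (ι → Bool) → Bool

namespace AndNetwork

variable {ι : Type*} {N : AndNetwork ι} {S : Finset ι} {f g : (ι → Bool) → Bool} {k m : ℕ}

/-- The function computed by gate `k`. -/
def val (N : AndNetwork ι) (k : ℕ) (x : ι → Bool) : Bool :=
  N.input k false x && N.input k true x

/-- `f` may feed a gate placed at position `m`: up to negation it is a constant, a variable in `S`,
or a gate before `m`. -/
inductive Available (N : AndNetwork ι) (S : Finset ι) (m : ℕ) (f : (ι → Bool) → Bool) : Prop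
  | const (hf : EqUpToNot f (fun _ => false))
  | var (i : ι) (hi : i ∈ S) (hf : EqUpToNot f (· i))
  | gate (k : ℕ) (hk : k ∈ N.gates) (hkm : k < m) (hf : EqUpToNot f (N.val k))

/-- Every gate is fed by functions available before it. -/
def Valid (N : AndNetwork ι) (S : Finset ι) : Prop :=
  ∀ k ∈ N.gates, ∀ p, N.Available S k (N.input k p)

/-- `N` is a network on the variables in `S` that computes `f`, up to negation. -/
def Computes (N : AndNetwork ι) (S : Finset ι) (f : (ι → Bool) → Bool) : Prop :=
  N.Valid S ∧ ∃ m, N.Available S m f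

/-- Gate `k` can be dispensed with: its value is available before it. -/
def Redundant (N : AndNetwork ι) (S : Finset ι) (k : ℕ) : Prop :=
  N.Available S k (N.val k)

/-- One of the two inputs of gate `k` is `f`, up to negation. -/
def Reads (N : AndNetwork ι) (k : ℕ) (f : (ι → Bool) → Bool) : Prop :=
  ∃ p, EqUpToNot (N.input k p) f

/-- `N` has the fewest gates among the networks on `S` computing `f`. -/
def IsOptimal (N : AndNetwork ι) (S : Finset ι) (f : (ι → Bool) → Bool) : Prop :=
  MinimalFor (fun N' : AndNetwork ι => N'.Computes S f) (fun N' => N'.gates.card) N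

/-- `N` without the gates in `R`. The inputs of the remaining gates are unchanged as functions. -/
def delete (N : AndNetwork ι) (R : Finset ℕ) : AndNetwork ι where
  gates := N.gates \ R
  input := N.input

theorem val_eq_input_and (N : AndNetwork ι) (k : ℕ) (p : Bool) (x : ι → Bool) :
    N.val k x = (N.input k p x && N.input k (!p) x) := by
  cases p
  · rfl
  · exact Bool.and_comm _ _

theorem Available.congr (hg : N.Available S m g) (hfg : EqUpToNot f g) : N.Available S m f := by
  cases hg with
  | const hg => exact .const (hfg.trans hg)
  | var i hi hg => exact .var i hi (hfg.trans hg)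
  | gate k hk hkm hg => exact .gate k hk hkm (hfg.trans hg)

theorem Available.mono {m' : ℕ} (hf : N.Available S m f) (hm : m ≤ m') : N.Available S m' f := by
  cases hf with
  | const hf => exact .const hf
  | var i hi hf => exact .var i hi hf
  | gate k hk hkm hf => exact .gate k hk (hkm.trans_le hm) hf

theorem Available.exists_gate_of_parityOn (hS : 1 < S.card) (h : N.Available S m (parityOn S)) :
    ∃ k ∈ N.gates, EqUpToNot (parityOn S) (N.val k) := by
  cases h with
  | const h => exact absurd h (not_eqUpToNot_parityOn_const (Finset.card_pos.mp (by omega)) false)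
  | var i _ h => exact absurd h (not_eqUpToNot_parityOn_apply hS i)
  | gate k hk _ h => exact ⟨k, hk, h⟩

theorem Reads.redundant_of_const (hN : N.Valid S) (hk : k ∈ N.gates) {c : Bool}
    (h : N.Reads k (fun _ => c)) : N.Redundant S k := by
  obtain ⟨p, u, hu⟩ := h
  have hval : ∀ x, N.val k x = ((c ^^ u) && N.input k (!p) x) := fun x => by
    rw [N.val_eq_input_and k p, hu]
  cases hcu : c ^^ u
  · exact .const (.of_eq fun x => by rw [hval, hcu, Bool.false_and])
  · exact (hN k hk (!p)).congr (.of_eq fun x => by rw [hval, hcu, Bool.true_and])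

theorem redundant_of_inputs_eqUpToNot (hN : N.Valid S) (hk : k ∈ N.gates)
    (h : EqUpToNot (N.input k true) (N.input k false)) : N.Redundant S k := by
  obtain ⟨u, hu⟩ := h
  cases u
  · exact (hN k hk false).congr (.of_eq fun x => by simp [val, hu])
  · exact .const (.of_eq fun x => by simp [val, hu])

theorem Reads.redundant_of_self (hN : N.Valid S) (hk : k ∈ N.gates) (h : N.Reads k (N.val k)) :
    N.Redundant S k := by
  obtain ⟨p, hp⟩ := h
  exact (hN k hk p).congr hp.symm

theorem Available.delete_of_redundant {R : Finset ℕ} (hR : ∀ k ∈ R, N.Redundant S k)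
    (hf : N.Available S m f) : (N.delete R).Available S m f := by
  induction m using Nat.strong_induction_on generalizing f with
  | _ m ih =>
  cases hf with
  | const hf => exact .const hf
  | var i hi hf => exact .var i hi hf
  | gate k hk hkm hf =>
    by_cases hkR : k ∈ R
    · exact ((ih k hkm (hR k hkR)).mono hkm.le).congr hf
    · exact .gate k (Finset.mem_sdiff.mpr ⟨hk, hkR⟩) hkm hf

theorem Computes.delete_of_redundant {R : Finset ℕ} (h : N.Computes S f)
    (hR : ∀ k ∈ R, N.Redundant S k) : (N.delete R).Computes S f := by
  obtain ⟨hN, m, hf⟩ := h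
  refine ⟨fun k hk p => ?_, m, hf.delete_of_redundant hR⟩
  exact (hN k (Finset.mem_sdiff.mp hk).1 p).delete_of_redundant hR

theorem Available.delete_of_not_eqUpToNot (hf : N.Available S m f)
    (hfk : ¬ EqUpToNot f (N.val k)) : (N.delete {k}).Available S m f := by
  cases hf with
  | const hf => exact .const hf
  | var i hi hf => exact .var i hi hf
  | gate l hl hlm hf =>
    have hlk : l ≠ k := by
      rintro rfl
      exact hfk hf
    exact .gate l (Finset.mem_sdiff.mpr ⟨hl, Finset.notMem_singleton.mpr hlk⟩) hlm hf

theorem Computes.delete_of_unread (h : N.Computes S f) (hfk : ¬ EqUpToNot f (N.val k))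
    (hunread : ∀ l ∈ N.gates, ¬ N.Reads l (N.val k)) : (N.delete {k}).Computes S f := by
  obtain ⟨hN, m, hf⟩ := h
  refine ⟨fun l hl p => ?_, m, hf.delete_of_not_eqUpToNot hfk⟩
  have hl' : l ∈ N.gates := (Finset.mem_sdiff.mp hl).1
  exact (hN l hl' p).delete_of_not_eqUpToNot fun hp => hunread l hl' ⟨p, hp⟩

theorem card_gates_delete_add {R : Finset ℕ} (hR : R ⊆ N.gates) :
    (N.delete R).gates.card + R.card = N.gates.card :=
  Finset.card_sdiff_add_card_eq_card hR

theorem IsOptimal.not_computes_delete_singleton (hN : N.IsOptimal S f) (hk : k ∈ N.gates) :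
    ¬ (N.delete {k}).Computes S f := fun h => by
  have hcard := card_gates_delete_add (Finset.singleton_subset_iff.mpr hk)
  rw [Finset.card_singleton] at hcard
  have hle := hN.le h
  omega

theorem IsOptimal.not_redundant (hN : N.IsOptimal S f) (hk : k ∈ N.gates) :
    ¬ N.Redundant S k := fun hred =>
  hN.not_computes_delete_singleton hk <|
    hN.prop.delete_of_redundant fun _ hl => Finset.mem_singleton.mp hl ▸ hred

theorem IsOptimal.exists_reader (hN : N.IsOptimal S f) (hk : k ∈ N.gates)
    (hfk : ¬ EqUpToNot f (N.val k)) : ∃ l ∈ N.gates, N.Reads l (N.val k) := by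
  by_contra! hunread
  exact hN.not_computes_delete_singleton hk (hN.prop.delete_of_unread hfk hunread)

theorem IsOptimal.exists_eqUpToNot_apply (hN : N.IsOptimal S f) (hk : k ∈ N.gates)
    (hfirst : ∀ l ∈ N.gates, k ≤ l) (p : Bool) : ∃ i ∈ S, EqUpToNot (N.input k p) (· i) := by
  cases hN.prop.1 k hk p with
  | const hp => exact absurd (Reads.redundant_of_const hN.prop.1 hk ⟨p, hp⟩) (hN.not_redundant hk)
  | var i hi hp => exact ⟨i, hi, hp⟩
  | gate l hl hlk _ => exact absurd (hfirst l hl) hlk.not_ge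

theorem IsOptimal.exists_gate_inputs_eqUpToNot_apply (hN : N.IsOptimal S f)
    (hne : N.gates.Nonempty) :
    ∃ k ∈ N.gates, ∃ i ∈ S, ∃ j ∈ S, i ≠ j ∧
      EqUpToNot (N.input k false) (· i) ∧ EqUpToNot (N.input k true) (· j) := by
  have hk := N.gates.min'_mem hne
  have hfirst : ∀ l ∈ N.gates, N.gates.min' hne ≤ l := N.gates.min'_le
  obtain ⟨i, hi, hki⟩ := hN.exists_eqUpToNot_apply hk hfirst false
  obtain ⟨j, hj, hkj⟩ := hN.exists_eqUpToNot_apply hk hfirst true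
  refine ⟨_, hk, i, hi, j, hj, ?_, hki, hkj⟩
  rintro rfl
  exact hN.not_redundant hk (redundant_of_inputs_eqUpToNot hN.prop.1 hk (hkj.trans hki.symm))

section Restriction

variable [DecidableEq ι] {i : ι} {c : Bool}

/-- `N` with the variable `i` fixed to `c`. -/
def restrict (N : AndNetwork ι) (i : ι) (c : Bool) : AndNetwork ι where
  gates := N.gates
  input k p x := N.input k p (update x i c)

theorem Available.restrict (hf : N.Available S m f) (i : ι) (c : Bool) :
    (N.restrict i c).Available (S.erase i) m (fun x => f (update x i c)) := by
  cases hf with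
  | const hf => exact .const (hf.comp (update · i c))
  | gate k hk hkm hf => exact .gate k hk hkm (hf.comp (update · i c))
  | var j hj hf =>
    have hfj := hf.comp (update · i c)
    by_cases hji : j = i
    · subst hji
      simp only [Function.update_self] at hfj
      exact .const (hfj.trans (eqUpToNot_const c false))
    · simp only [Function.update_of_ne hji] at hfj
      exact .var j (Finset.mem_erase.mpr ⟨hji, hj⟩) hfj

theorem Computes.restrict (h : N.Computes S f) (i : ι) (c : Bool) :
    (N.restrict i c).Computes (S.erase i) (fun x => f (update x i c)) :=
  ⟨fun k hk p => (h.1 k hk p).restrict i c, h.2.imp fun _ hf => hf.restrict i c⟩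

theorem Computes.restrict_parityOn (h : N.Computes S (parityOn S)) (hi : i ∈ S) (c : Bool) :
    (N.restrict i c).Computes (S.erase i) (parityOn (S.erase i)) := by
  obtain ⟨hN, m, hparity⟩ := h.restrict i c
  exact ⟨hN, m, hparity.congr (eqUpToNot_parityOn_erase hi c)⟩

theorem Reads.restrict (h : N.Reads k f) (i : ι) (c : Bool) :
    (N.restrict i c).Reads k (fun x => f (update x i c)) :=
  h.imp fun _ hp => hp.comp (update · i c)

theorem Reads.restrict_redundant (hN : N.Valid S) (hk : k ∈ N.gates) (h : N.Reads k f) {b : Bool}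
    (hf : ∀ x, f (update x i c) = b) : (N.restrict i c).Redundant (S.erase i) k := by
  have hread := h.restrict i c
  simp only [hf] at hread
  exact hread.redundant_of_const (fun l hl p => (hN l hl p).restrict i c) hk

theorem Reads.exists_val_update_eq_false (h : N.Reads k (· i)) :
    ∃ c, ∀ x, N.val k (update x i c) = false := by
  obtain ⟨p, c, hc⟩ := h
  exact ⟨c, fun x => by simp [N.val_eq_input_and k p, hc]⟩

theorem Valid.val_update_eq (hN : N.Valid S) {x : ι → Bool}
    (hread : ∀ k ∈ N.gates, N.Reads k (· i) → N.val k (update x i c) = N.val k x)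
    (hk : k ∈ N.gates) : N.val k (update x i c) = N.val k x := by
  induction k using Nat.strong_induction_on with
  | _ k ih =>
  by_cases hki : N.Reads k (· i)
  · exact hread k hk hki
  have hinput : ∀ p, N.input k p (update x i c) = N.input k p x := fun p => by
    cases hN k hk p with
    | const hp => exact hp.apply_eq_iff.mpr rfl
    | gate l hl hlk hp => exact hp.apply_eq_iff.mpr (ih l hlk hl)
    | var j _ hp =>
      have hji : j ≠ i := by
        rintro rfl
        exact hki ⟨p, hp⟩
      exact hp.apply_eq_iff.mpr (Function.update_of_ne hji _ _)
  rw [val, val, hinput, hinput]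

theorem IsOptimal.exists_reader_of_val_update_eq_false (hN : N.IsOptimal S (parityOn S))
    (hi : i ∈ S) (hS : 1 < S.card) (hk : k ∈ N.gates)
    (hc : ∀ x, N.val k (update x i c) = false) : ∃ l ∈ N.gates, N.Reads l (N.val k) := by
  refine hN.exists_reader hk fun hparity => ?_
  have hconst := (eqUpToNot_parityOn_erase hi c).trans (hparity.comp (update · i c))
  simp only [hc] at hconst
  refine not_eqUpToNot_parityOn_const ?_ false hconst
  exact (Finset.erase_nonempty hi).mpr (Finset.one_lt_card_iff_nontrivial.mp hS)

end Restriction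

theorem Computes.exists_reader_ne (h : N.Computes S (parityOn S)) (hS : 1 < S.card) {i j : ι}
    (hi : i ∈ S) (hij : i ≠ j) (hk : N.Reads k (· j)) : ∃ l ∈ N.gates, l ≠ k ∧ N.Reads l (· i) := by
  classical
  by_contra! hnone
  obtain ⟨hN, m, hparity⟩ := h
  obtain ⟨c, hc⟩ := hk.exists_val_update_eq_false
  let x : ι → Bool := update (fun _ => false) j c
  obtain ⟨o, ho, hparity_o⟩ := hparity.exists_gate_of_parityOn hS
  refine hparity_o.symm.apply_update_not_ne hi x (hN.val_update_eq (fun l hl hli => ?_) ho)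
  obtain rfl : l = k := by_contra fun hlk => hnone l hl hlk hli
  rw [hc, Function.update_comm hij.symm, hc]

theorem IsOptimal.exists_three_redundant_restrict [DecidableEq ι]
    (hN : N.IsOptimal S (parityOn S)) (hS : 1 < S.card) :
    ∃ i ∈ S, ∃ c, ∃ R ⊆ N.gates, R.card = 3 ∧
      ∀ k ∈ R, (N.restrict i c).Redundant (S.erase i) k := by
  have hvalid : N.Valid S := hN.prop.1
  obtain ⟨m, hparity⟩ := hN.prop.2
  obtain ⟨o, ho, -⟩ := hparity.exists_gate_of_parityOn hS
  obtain ⟨g, hg, i, hi, j, hj, hij, hgi, hgj⟩ := hN.exists_gate_inputs_eqUpToNot_apply ⟨o, ho⟩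
  obtain ⟨h, hh, hhg, hhi⟩ := hN.prop.exists_reader_ne hS hi hij ⟨true, hgj⟩
  obtain ⟨c, hc⟩ := hhi.exists_val_update_eq_false
  obtain ⟨r, hr, hrh⟩ := hN.exists_reader_of_val_update_eq_false hi hS hh hc
  have hr_ne_h : r ≠ h := by
    rintro rfl
    exact hN.not_redundant hr (hrh.redundant_of_self hvalid hr)
  have hr_ne_g : r ≠ g := by
    rintro rfl
    obtain ⟨p, hp⟩ := hrh
    cases p
    · exact hN.not_redundant hh (.var i hi (hp.symm.trans hgi))
    · exact hN.not_redundant hh (.var j hj (hp.symm.trans hgj))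
  refine ⟨i, hi, c, {g, h, r}, by grind, Finset.card_eq_three.mpr
    ⟨g, h, r, hhg.symm, hr_ne_g.symm, hr_ne_h.symm, rfl⟩, ?_⟩
  simp only [Finset.mem_insert, Finset.mem_singleton, forall_eq_or_imp, forall_eq]
  exact ⟨Reads.restrict_redundant hvalid hg ⟨false, hgi⟩ fun x => Function.update_self i c x,
    .const (.of_eq hc), hrh.restrict_redundant hvalid hr hc⟩

theorem Computes.three_mul_card_le (h : N.Computes S (parityOn S)) :
    3 * S.card ≤ N.gates.card + 3 := by
  classical
  induction S using Finset.strongInduction generalizing N with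
  | H S ih =>
  rcases le_or_gt S.card 1 with hS | hS
  · omega
  obtain ⟨M, hM⟩ : ∃ M : AndNetwork ι, M.IsOptimal S (parityOn S) :=
    exists_minimalFor_of_wellFoundedLT _ _ ⟨N, h⟩
  obtain ⟨i, hi, c, R, hRM, hRcard, hR⟩ := hM.exists_three_redundant_restrict hS
  have hsmaller := ih (S.erase i) (Finset.erase_ssubset hi)
    ((hM.prop.restrict_parityOn hi c).delete_of_redundant hR)
  have hcard : ((M.restrict i c).delete R).gates.card + R.card = M.gates.card :=
    card_gates_delete_add hRM
  have herase := Finset.card_erase_add_one hi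
  have hle : M.gates.card ≤ N.gates.card := hM.le h
  omega

end AndNetwork

namespace Gate

variable {n : ℕ}

theorem val_eq_of_prefix {acc acc' : List Bool} (hacc : acc <+: acc') (g : Gate n)
    (hg : ∀ r ∈ g.refs, r < acc.length) (x : Fin n → Bool) : g.val x acc' = g.val x acc := by
  obtain ⟨t, rfl⟩ := hacc
  have hget : ∀ r ∈ g.refs, (acc ++ t).getD r false = acc.getD r false := fun r hr =>
    List.getD_append _ _ _ _ (hg r hr)
  cases g <;> simp_all [Gate.val, Gate.refs]

/-- The two functions whose conjunction is, up to negation, the value of a binary gate: by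
De Morgan's law the inputs of an `∨` gate are negated. Other gates get the junk value `false`. -/
def conjunct (acc : List Bool) (p : Bool) : Gate n → Bool
  | .and a b => acc.getD (cond p b a) false
  | .or a b => !acc.getD (cond p b a) false
  | _ => false

theorem exists_val_eq_conjunct_and_xor (g : Gate n) (hg : g.costly) :
    ∃ u, ∀ x acc, g.val x acc = ((g.conjunct acc false && g.conjunct acc true) ^^ u) := by
  cases g with
  | and a b => exact ⟨false, fun x acc => by simp [val, conjunct]⟩
  | or a b => exact ⟨true, fun x acc => by simp [val, conjunct]⟩
  | inp | const | not => simp [costly] at hg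

theorem exists_conjunct_eq_getD_xor (g : Gate n) (hg : g.costly) (p : Bool) :
    ∃ r ∈ g.refs, ∃ u, ∀ acc, g.conjunct acc p = (acc.getD r false ^^ u) := by
  cases g with
  | and a b => exact ⟨cond p b a, by cases p <;> simp [refs], false, fun acc => by simp [conjunct]⟩
  | or a b => exact ⟨cond p b a, by cases p <;> simp [refs], true, fun acc => by simp [conjunct]⟩
  | inp | const | not => simp [costly] at hg

end Gate

namespace Circuit

variable {n : ℕ} (C : Circuit n)

theorem prefix_foldl_val (x : Fin n → Bool) (L : List (Gate n)) (acc : List Bool) :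
    acc <+: L.foldl (fun acc g => acc ++ [g.val x acc]) acc := by
  induction L generalizing acc with
  | nil => exact List.prefix_rfl
  | cons g L ih => exact (List.prefix_append _ _).trans (ih _)

theorem length_foldl_val (x : Fin n → Bool) (L : List (Gate n)) (acc : List Bool) :
    (L.foldl (fun acc g => acc ++ [g.val x acc]) acc).length = acc.length + L.length := by
  induction L generalizing acc with
  | nil => rfl
  | cons g L ih => rw [List.foldl_cons, ih, List.length_append, List.length_singleton,
      List.length_cons, add_assoc, add_comm 1]

theorem length_evalList (x : Fin n → Bool) : (C.evalList x).length = C.gates.length := by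
  simp [evalList, length_foldl_val]

/-- The value of node `k` of `C` as a function of the input. -/
def nodeVal (k : ℕ) (x : Fin n → Bool) : Bool :=
  (C.evalList x).getD k false

theorem nodeVal_eq_val {k : ℕ} (hk : k < C.gates.length) (x : Fin n → Bool) :
    C.nodeVal k x = C.gates[k].val x (C.evalList x) := by
  let before : List Bool := (C.gates.take k).foldl (fun acc g => acc ++ [g.val x acc]) []
  have hlength : before.length = k := by
    simp [before, length_foldl_val, hk.le]
  have hprefix : before ++ [C.gates[k].val x before] <+: C.evalList x := by
    have hsplit : C.gates = C.gates.take k ++ C.gates[k] :: C.gates.drop (k + 1) := by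
      rw [← List.drop_eq_getElem_cons hk, List.take_append_drop]
    have heval : C.evalList x = (C.gates.drop (k + 1)).foldl (fun acc g => acc ++ [g.val x acc])
        (before ++ [C.gates[k].val x before]) := by
      rw [← List.foldl_cons, ← List.foldl_append, ← hsplit, evalList]
    exact heval ▸ prefix_foldl_val x _ _
  have hrefs : ∀ r ∈ C.gates[k].refs, r < before.length := by
    rw [hlength]
    exact C.wf k _ (List.getElem?_eq_getElem hk)
  rw [Gate.val_eq_of_prefix ((List.prefix_append _ _).trans hprefix) _ hrefs]
  obtain ⟨t, ht⟩ := hprefix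
  simp [nodeVal, ← ht, ← hlength]

/-- The binary gates of `C`, each rewritten as a conjunction by De Morgan's law. -/
def toAndNetwork : AndNetwork (Fin n) where
  gates := (C.gates.findIdxs Gate.costly).toFinset
  input k p x := (C.gates.getD k (.const false)).conjunct (C.evalList x) p

theorem card_gates_toAndNetwork : C.toAndNetwork.gates.card = C.size := by
  rw [toAndNetwork, List.toFinset_card_of_nodup List.nodup_findIdxs, List.length_findIdxs,
    List.countP_eq_length_filter, size]

variable {C} {k : ℕ}

theorem mem_gates_toAndNetwork :
    k ∈ C.toAndNetwork.gates ↔ ∃ hk : k < C.gates.length, C.gates[k].costly := by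
  simp [toAndNetwork]

theorem input_toAndNetwork (hk : k < C.gates.length) (p : Bool) (x : Fin n → Bool) :
    C.toAndNetwork.input k p x = C.gates[k].conjunct (C.evalList x) p := by
  simp only [toAndNetwork, List.getD_eq_getElem _ _ hk]

theorem nodeVal_eqUpToNot_val (hk : k < C.gates.length) (hcostly : C.gates[k].costly) :
    EqUpToNot (C.nodeVal k) (C.toAndNetwork.val k) := by
  obtain ⟨u, hu⟩ := C.gates[k].exists_val_eq_conjunct_and_xor hcostly
  exact ⟨u, fun x => by
    rw [nodeVal_eq_val C hk, hu, AndNetwork.val, input_toAndNetwork hk, input_toAndNetwork hk]⟩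

theorem available_nodeVal (hk : k < C.gates.length) :
    C.toAndNetwork.Available Finset.univ (k + 1) (C.nodeVal k) := by
  induction k using Nat.strong_induction_on with
  | _ k ih =>
  by_cases hcostly : C.gates[k].costly
  · exact .gate k (mem_gates_toAndNetwork.mpr ⟨hk, hcostly⟩) k.lt_succ_self
      (nodeVal_eqUpToNot_val hk hcostly)
  have hval := nodeVal_eq_val C hk
  have hrefs := C.wf k _ (List.getElem?_eq_getElem hk)
  cases hgate : C.gates[k] with
  | inp i => exact .var i (Finset.mem_univ i) (.of_eq fun x => by rw [hval, hgate, Gate.val])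
  | const b =>
    exact .const (.trans (.of_eq fun x => by rw [hval, hgate, Gate.val]) (eqUpToNot_const b false))
  | not a =>
    have hak : a < k := hrefs a (by simp [hgate, Gate.refs])
    exact ((ih a hak (hak.trans hk)).mono (Nat.succ_le_succ hak.le)).congr
      ⟨true, fun x => by rw [hval, hgate, Gate.val, Bool.xor_true, nodeVal]⟩
  | and a b | or a b => simp [hgate, Gate.costly] at hcostly

theorem valid_toAndNetwork : C.toAndNetwork.Valid Finset.univ := fun k hk p => by
  obtain ⟨hk, hcostly⟩ := mem_gates_toAndNetwork.mp hk
  obtain ⟨r, hr, u, hu⟩ := C.gates[k].exists_conjunct_eq_getD_xor hcostly p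
  have hrk : r < k := C.wf k _ (List.getElem?_eq_getElem hk) r hr
  exact ((available_nodeVal (hrk.trans hk)).mono hrk).congr
    ⟨u, fun x => by rw [input_toAndNetwork hk, hu, nodeVal]⟩

theorem Computes.toAndNetwork {f : (Fin n → Bool) → Bool} (h : C.Computes f) :
    C.toAndNetwork.Computes Finset.univ f :=
  ⟨valid_toAndNetwork, _, (available_nodeVal C.output.isLt).congr (.of_eq fun x => (h x).symm)⟩

theorem Computes.three_mul_sub_one_le_size (h : C.Computes (XORf n)) : 3 * (n - 1) ≤ C.size := by
  rw [← parityOn_univ] at h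
  have hcard := h.toAndNetwork.three_mul_card_le
  rw [Finset.card_univ, Fintype.card_fin, card_gates_toAndNetwork] at hcard
  omega

variable (C)

/-- `C` extended by gates for `(o ∨ xᵢ) ∧ ¬(o ∧ xᵢ)`, where `o` is the output of `C`. -/
def xorInput (i : Fin n) : Circuit n where
  gates := C.gates ++
    [.inp i, .or C.output C.gates.length, .and C.output C.gates.length,
      .not (C.gates.length + 2), .and (C.gates.length + 1) (C.gates.length + 3)]
  output := ⟨C.gates.length + 4, by simp⟩
  wf k g hk := by
    have ho : (C.output : ℕ) < C.gates.length := C.output.isLt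
    rcases lt_or_ge k C.gates.length with hlt | hge
    · exact C.wf k g (by rwa [List.getElem?_append_left hlt] at hk)
    · rw [List.getElem?_append_right hge] at hk
      grind [Gate.refs]

theorem eval_xorInput (i : Fin n) (x : Fin n → Bool) :
    (C.xorInput i).eval x = (C.eval x ^^ x i) := by
  have hold : ∀ t, (C.evalList x ++ t).getD C.output false = C.eval x := fun t =>
    List.getD_append _ _ _ _ (by rw [length_evalList]; exact C.output.isLt)
  have hnew : ∀ t r, (C.evalList x ++ t).getD (C.gates.length + r) false = t.getD r false :=
    fun t r => by
      rw [List.getD_append_right _ _ _ _ (by rw [length_evalList]; omega), length_evalList,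
        Nat.add_sub_cancel_left]
  have hnew_zero : ∀ t, (C.evalList x ++ t).getD C.gates.length false = t.getD 0 false :=
    fun t => hnew t 0
  have hevalList : (C.xorInput i).evalList x = C.evalList x ++
      [x i, C.eval x || x i, C.eval x && x i, !(C.eval x && x i),
        (C.eval x || x i) && !(C.eval x && x i)] := by
    rw [evalList, xorInput, List.foldl_append, ← evalList]
    simp only [List.foldl_cons, List.foldl_nil, Gate.val, List.append_assoc, hold, hnew,
      hnew_zero, List.cons_append, List.nil_append, List.getD_cons_succ, List.getD_cons_zero]
  rw [eval, hevalList, xorInput, hnew]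
  cases C.eval x <;> cases x i <;> rfl

theorem size_xorInput (i : Fin n) : (C.xorInput i).size = C.size + 3 := by
  rw [size, xorInput, List.filter_append, List.length_append]
  rfl

theorem exists_computes_parityOn {S : Finset (Fin n)} (hS : S.Nonempty) :
    ∃ C : Circuit n, C.Computes (parityOn S) ∧ C.size = 3 * (S.card - 1) := by
  induction hS using Finset.Nonempty.cons_induction with
  | singleton i =>
    refine ⟨⟨[.inp i], ⟨0, by simp⟩, by simp [List.getElem?_singleton, Gate.refs]⟩, fun x => ?_, ?_⟩
    · rw [parityOn_singleton]
      rfl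
    · rfl
  | cons i S hi hS ih =>
    obtain ⟨C, hC, hsize⟩ := ih
    refine ⟨C.xorInput i, fun x => ?_, ?_⟩
    · rw [eval_xorInput, hC, parityOn_cons]
    · rw [size_xorInput, hsize, Finset.card_cons]
      have hpos := hS.card_pos
      omega

end Circuit

/-- Tightness of Schnorr's bound: for every `n ≥ 1` there is a DeMorgan
circuit with exactly `3(n-1)` binary gates computing `XOR_n`; hence
`CC(XOR_n) = 3(n-1)`. -/
theorem schnorr_tight :
    ∀ n : ℕ, 1 ≤ n →
      (∃ C : Circuit n, C.Computes (XORf n) ∧ C.size = 3 * (n - 1)) ∧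
      CC n (XORf n) = 3 * (n - 1) := by
  intro n hn
  have hexists : ∃ C : Circuit n, C.Computes (XORf n) ∧ C.size = 3 * (n - 1) := by
    have hne : (Finset.univ : Finset (Fin n)).Nonempty := ⟨⟨0, hn⟩, Finset.mem_univ _⟩
    simpa [parityOn_univ] using Circuit.exists_computes_parityOn hne
  refine ⟨hexists, IsLeast.csInf_eq ⟨hexists, ?_⟩⟩
  rintro _ ⟨C, hC, rfl⟩
  exact hC.three_mul_sub_one_le_size
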